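/- Let H be a complex Hilbert space and T a bounded operator on H. For every n ≥ 1, the spectrum of the n-fold tensor power T^{⊗n} on H^{⊗n} equals { Π_{j=1}^n λ_j : λ_j ∈ σ(T), j = 1,…,n }. -/

import Mathlib

open scoped InnerProductSpace

/-- An abstract presentation of the `n`-fold Hilbert tensor power of `H`:
a Hilbert space `Hn` together with a map `emb` sending `(x 1, …, x n)` to the
elementary tensor `x 1 ⊗ ⋯ ⊗ x n`, such that inner products of elementary
tensors multiply and the elementary tensors span a dense subspace. -/
structure TensorPowerStructure (H Hn : Type*) [NormedAddCommGroup H]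
    [InnerProductSpace ℂ H] [NormedAddCommGroup Hn] [InnerProductSpace ℂ Hn]
    (n : ℕ) where
  emb : (Fin n → H) → Hn
  inner_emb : ∀ x y : Fin n → H, ⟪emb x, emb y⟫_ℂ = ∏ i, ⟪x i, y i⟫_ℂ
  dense_span : Dense ((Submodule.span ℂ (Set.range emb) : Submodule ℂ Hn) : Set Hn)

/-- `Tn` is the `n`-fold tensor power `T^{⊗n}` of `T`, acting as `T` on each
factor of elementary tensors. -/
def IsTensorPowerOp {H Hn : Type*} [NormedAddCommGroup H] [InnerProductSpace ℂ H]
    [NormedAddCommGroup Hn] [InnerProductSpace ℂ Hn] {n : ℕ}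
    (tp : TensorPowerStructure H Hn n) (T : H →L[ℂ] H) (Tn : Hn →L[ℂ] Hn) : Prop :=
  ∀ x : Fin n → H, Tn (tp.emb x) = tp.emb fun i => T (x i)

/-!
Write `Tᵢ` for the operator acting as `T` on the `i`-th tensor factor. These operators commute and
their product is `T^{⊗n}`. Their double centralizer is a commutative Banach algebra in which spectra
are the same as among all operators, so by Gelfand theory `σ(T^{⊗n})` consists of the products
`∏ φ(Tᵢ)` over its characters `φ`, and the tuples `(φ(Tᵢ))ᵢ` form the joint spectrum of `(Tᵢ)ᵢ`.

The joint spectrum is all of `σ(T)ⁿ`. Indeed, if `lᵢ ∈ σ(T)`, there are unit vectors `xᵢ` for which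
`(lᵢ - T) xᵢ` or `(lᵢ - T)* xᵢ` is arbitrarily small. If `∑ Bᵢ (lᵢ - Tᵢ) = 1` with `Bᵢ` in the
double centralizer, pair this identity with `v = x₁ ⊗ ⋯ ⊗ xₙ`: since `Bᵢ` commutes with `lᵢ - Tᵢ`,
in each term the small factor can be moved onto `v`, on one side of the inner product or the other,
which gives `1 = ⟪v, v⟫ ≈ 0`.
-/

section JointSpectrum

variable {R A ι : Type*}

lemma units_inv_mem_centralizer {M : Type*} [Monoid M] {s : Set M} {u : Mˣ}
    (hu : (u : M) ∈ s.centralizer) : ((u⁻¹ : Mˣ) : M) ∈ s.centralizer :=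
  fun g hg => (show Commute g (u : M) from hu g hg).units_inv_right

section Ring

variable (R) [CommRing R] [Ring A] [Algebra R A]

lemma spectrum_coe_centralizer (s : Set A) (c : Subalgebra.centralizer R s) :
    spectrum R (c : A) = spectrum R c := by
  refine (AlgHom.spectrum_apply_subset (Subalgebra.centralizer R s).val c).antisymm ?_
  rintro r hr ⟨u, hu⟩
  have hmem : (u : A) ∈ Subalgebra.centralizer R s := hu ▸ (algebraMap R _ r - c).2
  have hinv : ((u⁻¹ : Aˣ) : A) ∈ Subalgebra.centralizer R s := units_inv_mem_centralizer hmem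
  refine hr ⟨⟨⟨u, hmem⟩, ⟨_, hinv⟩, Subtype.ext u.mul_inv, Subtype.ext u.inv_mul⟩, ?_⟩
  exact Subtype.ext hu

/-- The double centralizer of `s`. For a commuting set `s` it is a commutative subalgebra
containing `s` in which elements have the same spectrum as in the ambient algebra. -/
abbrev bicommutant (s : Set A) : Subalgebra R A :=
  Subalgebra.centralizer R s.centralizer

/-- The members of a family `a`, as elements of its double centralizer. -/
def toBicommutant (a : ι → A) (i : ι) : bicommutant R (Set.range a) :=
  ⟨a i, Set.subset_centralizer_centralizer ⟨i, rfl⟩⟩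

lemma bicommutant_mul_comm {a : ι → A} (ha : Pairwise (Function.onFun Commute a))
    (b c : bicommutant R (Set.range a)) : b * c = c * b := by
  have hcomm : ∀ x ∈ Set.range a, ∀ y ∈ Set.range a, x * y = y * x := by
    rintro _ ⟨i, rfl⟩ _ ⟨j, rfl⟩
    obtain rfl | hij := eq_or_ne i j
    exacts [rfl, ha hij]
  exact Subtype.ext (Set.centralizer_centralizer_comm_of_comm hcomm _ b.2 _ c.2)

lemma commute_bicommutant_algebraMap_sub {a : ι → A} (ha : Pairwise (Function.onFun Commute a))
    (b : bicommutant R (Set.range a)) (r : R) (i : ι) :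
    Commute (b : A) (algebraMap R A r - a i) :=
  congrArg Subtype.val (bicommutant_mul_comm R ha b (algebraMap R _ r - toBicommutant R a i))

variable [Fintype ι]

/-- The joint spectrum of a finite commuting family `a`, relative to its double centralizer: the
tuples `l` for which the elements `l i - a i` generate a proper ideal of the double centralizer. -/
def jointSpectrum (a : ι → A) : Set (ι → R) :=
  {l | ∀ b : ι → bicommutant R (Set.range a), ∑ i, (b i : A) * (algebraMap R A (l i) - a i) ≠ 1}

lemma mem_spectrum_of_mem_jointSpectrum {a : ι → A} {l : ι → R} (hl : l ∈ jointSpectrum R a)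
    (i : ι) : l i ∈ spectrum R (a i) := by
  classical
  rintro ⟨u, hu⟩
  have hmem : (u : A) ∈ bicommutant R (Set.range a) :=
    hu ▸ (algebraMap R _ (l i) - toBicommutant R a i).2
  refine hl (Pi.single i ⟨_, units_inv_mem_centralizer hmem⟩) ?_
  rw [Fintype.sum_eq_single i fun j hj => by simp [hj], Pi.single_eq_same, ← hu, u.inv_mul]

end Ring

lemma exists_algHom_forall_mem_eq_zero [NormedCommRing A] [NormedAlgebra ℂ A] [CompleteSpace A]
    {I : Ideal A} (hI : I ≠ ⊤) : ∃ φ : A →ₐ[ℂ] ℂ, ∀ x ∈ I, φ x = 0 := by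
  obtain ⟨M, hM, hIM⟩ := I.exists_le_maximal hI
  exact ⟨WeakDual.CharacterSpace.toAlgHom M.toCharacterSpace,
    fun x hx => M.toCharacterSpace_apply_eq_zero_of_mem (hIM hx)⟩

variable [NormedRing A] [NormedAlgebra ℂ A] {a : ι → A}

/-- The double centralizer of a commuting family, as a commutative normed ring. It is not an
instance because it depends on the commutation hypothesis. -/
abbrev bicommutantNormedCommRing (ha : Pairwise (Function.onFun Commute a)) :
    NormedCommRing (bicommutant ℂ (Set.range a)) where
  mul_comm := bicommutant_mul_comm ℂ ha

variable [CompleteSpace A]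

instance completeSpace_bicommutant (s : Set A) : CompleteSpace (bicommutant ℂ s) :=
  (Set.isClosed_centralizer s.centralizer).completeSpace_coe

variable [Fintype ι]

lemma mem_jointSpectrum_iff_exists_algHom (ha : Pairwise (Function.onFun Commute a))
    {l : ι → ℂ} : l ∈ jointSpectrum ℂ a ↔
      ∃ φ : bicommutant ℂ (Set.range a) →ₐ[ℂ] ℂ, ∀ i, φ (toBicommutant ℂ a i) = l i := by
  let _ := bicommutantNormedCommRing ha
  constructor
  · intro hl
    let d (i : ι) : bicommutant ℂ (Set.range a) := algebraMap ℂ _ (l i) - toBicommutant ℂ a i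
    have hproper : Ideal.span (Set.range d) ≠ ⊤ := by
      rw [Ne, Ideal.eq_top_iff_one, Ideal.mem_span_range_iff_exists_fun]
      rintro ⟨b, hb⟩
      exact hl b (by simpa [d, toBicommutant] using congrArg Subtype.val hb)
    obtain ⟨φ, hφ⟩ := exists_algHom_forall_mem_eq_zero hproper
    refine ⟨φ, fun i => ?_⟩
    have hzero : φ (d i) = 0 := hφ _ (Ideal.subset_span ⟨i, rfl⟩)
    rw [map_sub, AlgHom.commutes, sub_eq_zero] at hzero
    exact hzero.symm
  · rintro ⟨φ, hφ⟩ b hb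
    have hsum : ∑ i, b i * (algebraMap ℂ _ (l i) - toBicommutant ℂ a i) = 1 :=
      Subtype.ext (by simpa [toBicommutant] using hb)
    have := congrArg φ hsum
    simp [hφ] at this

theorem spectrum_noncommProd_eq_image_jointSpectrum
    (ha : Pairwise (Function.onFun Commute a)) :
    spectrum ℂ (Finset.univ.noncommProd a (ha.set_pairwise _)) =
      (fun l => ∏ i, l i) '' jointSpectrum ℂ a := by
  let _ := bicommutantNormedCommRing ha
  have hprod : Finset.univ.noncommProd a (ha.set_pairwise _) =
      (∏ i, toBicommutant ℂ a i : bicommutant ℂ (Set.range a)) := by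
    rw [← Finset.noncommProd_eq_prod]
    exact (Finset.map_noncommProd Finset.univ (toBicommutant ℂ a) _
      (bicommutant ℂ (Set.range a)).val).symm
  rw [hprod, spectrum_coe_centralizer]
  ext z
  constructor
  · intro hz
    obtain ⟨φ, rfl⟩ := WeakDual.CharacterSpace.mem_spectrum_iff_exists.mp hz
    exact ⟨fun i => φ (toBicommutant ℂ a i), (mem_jointSpectrum_iff_exists_algHom ha).mpr
      ⟨WeakDual.CharacterSpace.toAlgHom φ, fun _ => rfl⟩, (map_prod φ _ _).symm⟩
  · rintro ⟨l, hl, rfl⟩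
    obtain ⟨φ, hφ⟩ := (mem_jointSpectrum_iff_exists_algHom ha).mp hl
    simpa only [map_prod, hφ] using AlgHom.apply_mem_spectrum φ (∏ i, toBicommutant ℂ a i)

end JointSpectrum

section Hilbert

variable {𝕜 E F ι : Type*} [RCLike 𝕜]
  [NormedAddCommGroup E] [InnerProductSpace 𝕜 E] [NormedAddCommGroup F] [InnerProductSpace 𝕜 F]

lemma mul_norm_le_norm_apply_of_forall_norm_eq_one {V W : Type*} [NormedAddCommGroup V]
    [NormedSpace 𝕜 V] [SeminormedAddCommGroup W] [NormedSpace 𝕜 W] {S : V →L[𝕜] W} {c : ℝ}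
    (h : ∀ x, ‖x‖ = 1 → c ≤ ‖S x‖) (x : V) : c * ‖x‖ ≤ ‖S x‖ := by
  obtain rfl | hx := eq_or_ne x 0
  · simp
  have hunit := h _ (norm_smul_inv_norm (𝕜 := 𝕜) hx)
  rwa [map_smul, norm_smul, norm_inv, RCLike.norm_ofReal, abs_norm, inv_mul_eq_div,
    le_div_iff₀ (norm_pos_iff.mpr hx)] at hunit

lemma isUnit_of_mul_norm_le [CompleteSpace E] {S : E →L[𝕜] E} {c : ℝ} (hc : 0 < c)
    (hS : ∀ x, c * ‖x‖ ≤ ‖S x‖) (hS' : ∀ x, c * ‖x‖ ≤ ‖star S x‖) : IsUnit S := by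
  rw [ContinuousLinearMap.isUnit_iff_bijective,
    ContinuousLinearMap.bijective_iff_dense_range_and_antilipschitz]
  refine ⟨?_, antilipschitzWith_iff_exists_mul_le_norm.mpr ⟨c, hc, hS⟩⟩
  rw [Submodule.topologicalClosure_eq_top_iff, ContinuousLinearMap.orthogonal_range,
    LinearMap.ker_eq_bot]
  obtain ⟨K, hK⟩ := antilipschitzWith_iff_exists_mul_le_norm.mpr ⟨c, hc, hS'⟩
  exact hK.injective

lemma exists_norm_eq_one_and_norm_apply_lt_of_not_isUnit [CompleteSpace E] {S : E →L[𝕜] E}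
    (hS : ¬IsUnit S) {ε : ℝ} (hε : 0 < ε) :
    ∃ x, ‖x‖ = 1 ∧ (‖S x‖ < ε ∨ ‖star S x‖ < ε) := by
  contrapose! hS
  exact isUnit_of_mul_norm_le hε
    (mul_norm_le_norm_apply_of_forall_norm_eq_one fun x hx => (hS x hx).1)
    (mul_norm_le_norm_apply_of_forall_norm_eq_one fun x hx => (hS x hx).2)

lemma norm_inner_mul_apply_self_le [CompleteSpace E] {B S : E →L[𝕜] E} (hBS : Commute B S)
    {v : E} (hv : ‖v‖ = 1) {ε : ℝ} (h : ‖S v‖ ≤ ε ∨ ‖star S v‖ ≤ ε) :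
    ‖⟪v, (B * S) v⟫_𝕜‖ ≤ ‖B‖ * ε := by
  rcases h with h | h
  · calc ‖⟪v, (B * S) v⟫_𝕜‖ ≤ ‖v‖ * ‖B (S v)‖ := norm_inner_le_norm v _
      _ ≤ 1 * (‖B‖ * ‖S v‖) := by rw [hv]; gcongr; exact B.le_opNorm _
      _ ≤ ‖B‖ * ε := by rw [one_mul]; gcongr
  · calc ‖⟪v, (B * S) v⟫_𝕜‖ = ‖⟪star S v, B v⟫_𝕜‖ := by
          rw [hBS.eq, ContinuousLinearMap.star_eq_adjoint,
            ContinuousLinearMap.adjoint_inner_left]; rfl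
      _ ≤ ‖star S v‖ * ‖B v‖ := norm_inner_le_norm _ _
      _ ≤ ε * ‖B‖ :=
          mul_le_mul h (B.unit_le_opNorm v hv.le) (norm_nonneg _) ((norm_nonneg _).trans h)
      _ = ‖B‖ * ε := mul_comm _ _

lemma sum_mul_ne_one_of_forall_exists_norm_apply_lt [CompleteSpace E] [Fintype ι]
    {B S : ι → E →L[𝕜] E} (hBS : ∀ i, Commute (B i) (S i))
    (h : ∀ ε > 0, ∃ v, ‖v‖ = 1 ∧ ∀ i, ‖S i v‖ < ε ∨ ‖star (S i) v‖ < ε) :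
    ∑ i, B i * S i ≠ 1 := by
  intro hsum
  set K : ℝ := ∑ i, ‖B i‖
  have hK : 0 < K + 1 := by positivity
  obtain ⟨v, hv, hvS⟩ := h (K + 1)⁻¹ (inv_pos.mpr hK)
  have hone : (1 : ℝ) ≤ K * (K + 1)⁻¹ :=
    calc (1 : ℝ) = ‖⟪v, (∑ i, B i * S i) v⟫_𝕜‖ := by
          simp [hsum, inner_self_eq_norm_sq_to_K, hv]
      _ = ‖∑ i, ⟪v, (B i * S i) v⟫_𝕜‖ := by rw [sum_apply, inner_sum]
      _ ≤ ∑ i, ‖B i‖ * (K + 1)⁻¹ :=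
          norm_sum_le_of_le _ fun i _ =>
            norm_inner_mul_apply_self_le (hBS i) hv ((hvS i).imp le_of_lt le_of_lt)
      _ = K * (K + 1)⁻¹ := (Finset.sum_mul ..).symm
  rw [← div_eq_mul_inv, one_le_div hK] at hone
  linarith

lemma exists_clm_apply_eq_of_inner_eq [CompleteSpace F] {X : Type*} {f : X → E} {g : X → F}
    (hf : Dense (Submodule.span 𝕜 (Set.range f) : Set E))
    (hfg : ∀ x y, ⟪g x, g y⟫_𝕜 = ⟪f x, f y⟫_𝕜) : ∃ P : E →L[𝕜] F, ∀ x, P (f x) = g x := by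
  let L := Finsupp.linearCombination 𝕜 f
  let M := Finsupp.linearCombination 𝕜 g
  have hL : DenseRange L := by
    rwa [← Finsupp.range_linearCombination, LinearMap.coe_range] at hf
  have hinner : ∀ c, ⟪M c, M c⟫_𝕜 = ⟪L c, L c⟫_𝕜 := fun c => by
    simp only [M, L, Finsupp.linearCombination_apply, Finsupp.sum_inner, Finsupp.inner_sum,
      inner_smul_left, inner_smul_right, hfg]
  have hnorm : ∀ c, ‖M c‖ ≤ 1 * ‖L c‖ := fun c => by
    rw [one_mul, norm_eq_sqrt_re_inner (𝕜 := 𝕜) (M c), hinner, ← norm_eq_sqrt_re_inner]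
  refine ⟨M.extendOfNorm L, fun x => ?_⟩
  simpa [L, M] using LinearMap.extendOfNorm_eq hL ⟨1, hnorm⟩ (Finsupp.single x 1)

end Hilbert

namespace TensorPowerStructure

variable {H Hn : Type*} [NormedAddCommGroup H] [InnerProductSpace ℂ H]
  [NormedAddCommGroup Hn] [InnerProductSpace ℂ Hn] {n : ℕ} (tp : TensorPowerStructure H Hn n)

lemma clm_ext {P Q : Hn →L[ℂ] Hn} (h : ∀ x, P (tp.emb x) = Q (tp.emb x)) : P = Q :=
  ContinuousLinearMap.ext_on tp.dense_span (Set.forall_mem_range.mpr h)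

lemma ext_inner_emb {v w : Hn} (h : ∀ x, ⟪tp.emb x, v⟫_ℂ = ⟪tp.emb x, w⟫_ℂ) : v = w := by
  refine tp.dense_span.eq_of_inner_right ℂ fun u hu => ?_
  induction hu using Submodule.span_induction with
  | mem u hu => obtain ⟨x, rfl⟩ := hu; exact h x
  | zero => simp only [inner_zero_left]
  | add u₁ u₂ _ _ h₁ h₂ => rw [inner_add_left, inner_add_left, h₁, h₂]
  | smul c u _ h => rw [inner_smul_left, inner_smul_left, h]

lemma inner_emb_update_update (x y : Fin n → H) (i : Fin n) (u v : H) :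
    ⟪tp.emb (Function.update x i u), tp.emb (Function.update y i v)⟫_ℂ =
      ⟪u, v⟫_ℂ * ∏ j ∈ Finset.univ.erase i, ⟪x j, y j⟫_ℂ := by
  rw [tp.inner_emb, ← Finset.mul_prod_erase _ _ (Finset.mem_univ i), Function.update_self,
    Function.update_self]
  congr 1
  refine Finset.prod_congr rfl fun j hj => ?_
  rw [Function.update_of_ne (Finset.ne_of_mem_erase hj),
    Function.update_of_ne (Finset.ne_of_mem_erase hj)]

lemma inner_emb_update_right (x y : Fin n → H) (i : Fin n) (v : H) :
    ⟪tp.emb x, tp.emb (Function.update y i v)⟫_ℂ =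
      ⟪x i, v⟫_ℂ * ∏ j ∈ Finset.univ.erase i, ⟪x j, y j⟫_ℂ := by
  simpa only [Function.update_eq_self] using tp.inner_emb_update_update x y i (x i) v

lemma inner_emb_update_left (x y : Fin n → H) (i : Fin n) (u : H) :
    ⟪tp.emb (Function.update x i u), tp.emb y⟫_ℂ =
      ⟪u, y i⟫_ℂ * ∏ j ∈ Finset.univ.erase i, ⟪x j, y j⟫_ℂ := by
  simpa only [Function.update_eq_self] using tp.inner_emb_update_update x y i u (y i)

lemma norm_emb (x : Fin n → H) : ‖tp.emb x‖ = ∏ i, ‖x i‖ := by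
  have hsq : ‖tp.emb x‖ ^ 2 = (∏ i, ‖x i‖) ^ 2 := by
    have h := tp.inner_emb x x
    simp only [inner_self_eq_norm_sq_to_K] at h
    rw [← Finset.prod_pow]
    exact_mod_cast h
  exact (pow_left_inj₀ (norm_nonneg _) (by positivity) two_ne_zero).mp hsq

lemma emb_update_add (x : Fin n → H) (i : Fin n) (v w : H) :
    tp.emb (Function.update x i (v + w)) =
      tp.emb (Function.update x i v) + tp.emb (Function.update x i w) :=
  tp.ext_inner_emb fun y => by simp only [inner_emb_update_right, inner_add_right, add_mul]

lemma emb_update_smul (x : Fin n → H) (i : Fin n) (c : ℂ) (v : H) :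
    tp.emb (Function.update x i (c • v)) = c • tp.emb (Function.update x i v) :=
  tp.ext_inner_emb fun y => by simp only [inner_emb_update_right, inner_smul_right, mul_assoc]

lemma emb_update_zero (x : Fin n → H) (i : Fin n) : tp.emb (Function.update x i 0) = 0 := by
  simpa only [zero_smul] using tp.emb_update_smul x i 0 0

variable [CompleteSpace H] [CompleteSpace Hn]

lemma exists_apply_emb_eq_emb_update_of_mem_unitary (i : Fin n) {U : H →L[ℂ] H}
    (hU : U ∈ unitary (H →L[ℂ] H)) :
    ∃ P : Hn →L[ℂ] Hn, ∀ x, P (tp.emb x) = tp.emb (Function.update x i (U (x i))) := by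
  refine exists_clm_apply_eq_of_inner_eq tp.dense_span fun x y => ?_
  have hinner : ⟪U (x i), U (y i)⟫_ℂ = ⟪x i, y i⟫_ℂ :=
    U.inner_map_map_iff_adjoint_comp_self.mpr (Unitary.mem_iff.mp hU).1 (x i) (y i)
  rw [tp.inner_emb_update_update, hinner, ← tp.inner_emb_update_update, Function.update_eq_self,
    Function.update_eq_self]

lemma exists_apply_emb_eq_emb_update (i : Fin n) (S : H →L[ℂ] H) :
    ∃ P : Hn →L[ℂ] Hn, ∀ x, P (tp.emb x) = tp.emb (Function.update x i (S (x i))) := by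
  have hS : S ∈ Submodule.span ℂ (unitary (H →L[ℂ] H) : Set (H →L[ℂ] H)) :=
    CStarAlgebra.span_unitary (H →L[ℂ] H) ▸ Submodule.mem_top
  induction hS using Submodule.span_induction with
  | mem U hU => exact tp.exists_apply_emb_eq_emb_update_of_mem_unitary i hU
  | zero => exact ⟨0, fun x => by simp [emb_update_zero]⟩
  | add A B _ _ hA hB =>
    obtain ⟨P, hP⟩ := hA
    obtain ⟨Q, hQ⟩ := hB
    exact ⟨P + Q, fun x => by simp [hP, hQ, emb_update_add]⟩
  | smul c A _ hA =>
    obtain ⟨P, hP⟩ := hA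
    exact ⟨c • P, fun x => by simp [hP, emb_update_smul]⟩

/-- The operator `1 ⊗ ⋯ ⊗ S ⊗ ⋯ ⊗ 1` acting as `S` on the `i`-th tensor factor. -/
noncomputable def factorOp (i : Fin n) (S : H →L[ℂ] H) : Hn →L[ℂ] Hn :=
  (tp.exists_apply_emb_eq_emb_update i S).choose

@[simp]
lemma factorOp_emb (i : Fin n) (S : H →L[ℂ] H) (x : Fin n → H) :
    tp.factorOp i S (tp.emb x) = tp.emb (Function.update x i (S (x i))) :=
  (tp.exists_apply_emb_eq_emb_update i S).choose_spec x

/-- The ampliation `S ↦ 1 ⊗ ⋯ ⊗ S ⊗ ⋯ ⊗ 1` to the `i`-th tensor factor, as a morphism of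
star algebras. -/
noncomputable def ampliation (i : Fin n) : (H →L[ℂ] H) →⋆ₐ[ℂ] (Hn →L[ℂ] Hn) where
  toFun := tp.factorOp i
  map_one' := tp.clm_ext fun x => by simp
  map_mul' A B := tp.clm_ext fun x => by simp
  map_zero' := tp.clm_ext fun x => by simp [emb_update_zero]
  map_add' A B := tp.clm_ext fun x => by simp [emb_update_add]
  commutes' c := tp.clm_ext fun x => by
    simp [Algebra.algebraMap_eq_smul_one, emb_update_smul]
  map_star' S := tp.clm_ext fun x => tp.ext_inner_emb fun y => by
    simp [ContinuousLinearMap.star_eq_adjoint, ContinuousLinearMap.adjoint_inner_right,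
      inner_emb_update_left, inner_emb_update_right]

lemma ampliation_emb (i : Fin n) (S : H →L[ℂ] H) (x : Fin n → H) :
    tp.ampliation i S (tp.emb x) = tp.emb (Function.update x i (S (x i))) :=
  tp.factorOp_emb i S x

lemma norm_ampliation_emb (i : Fin n) (S : H →L[ℂ] H) {x : Fin n → H} (hx : ∀ j, ‖x j‖ = 1) :
    ‖tp.ampliation i S (tp.emb x)‖ = ‖S (x i)‖ := by
  rw [ampliation_emb, norm_emb, Fintype.prod_eq_single i fun j hj => by simp [hj, hx],
    Function.update_self]

lemma pairwise_commute_ampliation (T : Fin n → H →L[ℂ] H) :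
    Pairwise (Function.onFun Commute fun i => tp.ampliation i (T i)) := fun i j hij =>
  tp.clm_ext fun x => by
    simp [ampliation_emb, hij, hij.symm, Function.update_comm hij]

lemma noncommProd_ampliation_emb (T : Fin n → H →L[ℂ] H) (s : Finset (Fin n)) (x : Fin n → H) :
    s.noncommProd (fun i => tp.ampliation i (T i))
        ((tp.pairwise_commute_ampliation T).set_pairwise _) (tp.emb x) =
      tp.emb (s.piecewise (fun i => T i (x i)) x) := by
  induction s using Finset.induction_on with
  | empty => simp
  | insert i s hi ih =>
    rw [Finset.noncommProd_insert_of_notMem _ _ _ _ hi, mul_apply_eq_comp, ih, ampliation_emb,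
      Finset.piecewise_insert, Finset.piecewise_eq_of_notMem _ _ _ hi]

theorem jointSpectrum_ampliation (T : Fin n → H →L[ℂ] H) :
    jointSpectrum ℂ (fun i => tp.ampliation i (T i)) = Set.univ.pi fun i => spectrum ℂ (T i) := by
  refine Set.Subset.antisymm (fun l hl i _ => ?_) (fun l hl b => ?_)
  · exact AlgHom.spectrum_apply_subset (tp.ampliation i) (T i)
      (mem_spectrum_of_mem_jointSpectrum ℂ hl i)
  · have hcomm (i : Fin n) :
        Commute (b i : Hn →L[ℂ] Hn) (algebraMap ℂ _ (l i) - tp.ampliation i (T i)) :=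
      commute_bicommutant_algebraMap_sub ℂ (tp.pairwise_commute_ampliation T) (b i) (l i) i
    refine sum_mul_ne_one_of_forall_exists_norm_apply_lt hcomm fun ε hε => ?_
    choose x hx hxT using fun i => exists_norm_eq_one_and_norm_apply_lt_of_not_isUnit
      (spectrum.mem_iff.mp (hl i (Set.mem_univ i))) hε
    have hmap (i : Fin n) : algebraMap ℂ _ (l i) - tp.ampliation i (T i) =
        tp.ampliation i (algebraMap ℂ _ (l i) - T i) := by
      rw [map_sub, AlgHomClass.commutes]
    refine ⟨tp.emb x, by simp [norm_emb, hx], fun i => ?_⟩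
    rw [hmap, ← map_star, norm_ampliation_emb _ _ _ hx, norm_ampliation_emb _ _ _ hx]
    exact hxT i

end TensorPowerStructure

theorem spectrum_tensorPow_eq_prod_general
    {H Hn : Type*} [NormedAddCommGroup H] [InnerProductSpace ℂ H] [CompleteSpace H]
    [NormedAddCommGroup Hn] [InnerProductSpace ℂ Hn] [CompleteSpace Hn]
    {n : ℕ} (tp : TensorPowerStructure H Hn n) (T : Fin n → H →L[ℂ] H) (Tn : Hn →L[ℂ] Hn)
    (hTn : ∀ x, Tn (tp.emb x) = tp.emb fun i => T i (x i)) :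
    spectrum ℂ Tn =
      {z : ℂ | ∃ l : Fin n → ℂ, (∀ j, l j ∈ spectrum ℂ (T j)) ∧ z = ∏ j, l j} := by
  have hprod : Tn = Finset.univ.noncommProd (fun i => tp.ampliation i (T i))
      ((tp.pairwise_commute_ampliation T).set_pairwise _) :=
    tp.clm_ext fun x => by rw [hTn, tp.noncommProd_ampliation_emb, Finset.piecewise_univ]
  rw [hprod, spectrum_noncommProd_eq_image_jointSpectrum (tp.pairwise_commute_ampliation T),
    tp.jointSpectrum_ampliation]
  simp only [Set.image, Set.mem_univ_pi, eq_comm]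

/-- The spectrum of the `n`-fold tensor power `T^{⊗n}` equals the set of products
`λ₁ ⋯ λₙ` with each `λⱼ ∈ σ(T)`. -/
theorem spectrum_tensorPow_eq_prod
    {H Hn : Type*} [NormedAddCommGroup H] [InnerProductSpace ℂ H] [CompleteSpace H]
    [Nontrivial H]
    [NormedAddCommGroup Hn] [InnerProductSpace ℂ Hn] [CompleteSpace Hn]
    {n : ℕ} (hn : 1 ≤ n) (tp : TensorPowerStructure H Hn n)
    (T : H →L[ℂ] H) (Tn : Hn →L[ℂ] Hn) (hTn : IsTensorPowerOp tp T Tn) :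
    spectrum ℂ Tn =
      {z : ℂ | ∃ l : Fin n → ℂ, (∀ j, l j ∈ spectrum ℂ T) ∧ z = ∏ j, l j} := by
  exact spectrum_tensorPow_eq_prod_general tp (fun _ => T) Tn hTn
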